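/- Let m ≥ 0, n ≥ 1 be integers and μ ∈ ℝ. Then σ_{m,n}(z) = z · (d/dz)T_{m,n}^{(μ)}(z) / T_{m,n}^{(μ)}(z) − (m+1)n is a solution of S_V with parameters ν = (m+1, −n, m+n+μ+1), at every z ≠ 0 with T_{m,n}^{(μ)}(z) ≠ 0. -/

import Mathlib

noncomputable section

open Finset

/-- Generalized binomial coefficient `C(x, k)` for real `x`. -/
def genBinom (x : ℝ) (k : ℕ) : ℝ :=
  (∏ i ∈ Finset.range k, (x - i)) / (Nat.factorial k)

/-- Associated Laguerre polynomial `L_n^{(α)}(z)`, with the convention `L_n^{(α)} = 0` for `n < 0`. -/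
def lagL (n : ℤ) (α : ℝ) : ℝ → ℝ := fun z =>
  if n < 0 then 0
  else ∑ k ∈ Finset.range (n.toNat + 1),
    (-1 : ℝ) ^ k * genBinom ((n : ℝ) + α) (n.toNat - k) * z ^ k / (Nat.factorial k)

/-- Generalised Laguerre polynomial
`T_{m,n}^{(μ)}(z) = det[(d/dz)^{j+k} L_{m+n}^{(μ+1)}(z)]_{j,k=0}^{n-1}`
(with `T_{m,0}^{(μ)} = 1`, the empty determinant). -/
def genLag (m : ℤ) (n : ℕ) (μ : ℝ) : ℝ → ℝ := fun z =>
  Matrix.det (Matrix.of fun j k : Fin n =>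
    iteratedDeriv ((j : ℕ) + (k : ℕ)) (lagL (m + n) (μ + 1)) z)

/-- Wronskian `Wr(f_1, …, f_r)(z) = det[(d/dz)^{j-1} f_k(z)]`. -/
def wronskian {r : ℕ} (f : Fin r → ℝ → ℝ) : ℝ → ℝ := fun z =>
  Matrix.det (Matrix.of fun j k : Fin r => iteratedDeriv (j : ℕ) (f k) z)

/-- The constant `c_{m,n} = (-1)^{n(2m+1+n)/2} ∏_{j=1}^n (j-1)!/(m+j)!`. -/
def cmn (m n : ℕ) : ℝ :=
  (-1 : ℝ) ^ (n * (2 * m + 1 + n) / 2) *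
    ∏ j ∈ Finset.range n, (Nat.factorial j : ℝ) / (Nat.factorial (m + j + 1))

/-- `τ_{m,n}^{(μ)}(z) = det[(z d/dz)^{j+k} L_{m+n}^{(n+μ)}(z)]_{j,k=0}^{n-1}`. -/
def tauP (m : ℤ) (n : ℕ) (μ : ℝ) : ℝ → ℝ := fun z =>
  Matrix.det (Matrix.of fun j k : Fin n =>
    ((fun (g : ℝ → ℝ) => fun t => t * deriv g t)^[(j : ℕ) + (k : ℕ)]
      (lagL (m + n) ((n : ℝ) + μ))) z)

/-- Hirota bilinear operator `D_z(f • g) = f' g - f g'`. -/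
def hirota (f g : ℝ → ℝ) (z : ℝ) : ℝ := deriv f z * g z - f z * deriv g z

/-- Probabilists' Hermite polynomial `He_n` as a real function. -/
def He (n : ℕ) : ℝ → ℝ := fun z => Polynomial.aeval z (Polynomial.hermite n)

/-- The fifth Painlevé equation (with `δ = -1/2`) for `w` with parameters `(a, b, c)`,
holding at the point `z`. -/
def PV (a b c : ℝ) (w : ℝ → ℝ) (z : ℝ) : Prop :=
  iteratedDeriv 2 w z =
    (1 / (2 * w z) + 1 / (w z - 1)) * (deriv w z) ^ 2
      - (1 / z) * deriv w z
      + (w z - 1) ^ 2 * (a * (w z) ^ 2 + b) / (z ^ 2 * w z)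
      + c * w z / z
      - w z * (w z + 1) / (2 * (w z - 1))

/-- The Jimbo–Miwa–Okamoto `σ`-equation `S_V` with parameters `(ν₁, ν₂, ν₃)`,
holding at the point `z`. -/
def SV (ν₁ ν₂ ν₃ : ℝ) (σ : ℝ → ℝ) (z : ℝ) : Prop :=
  (z * iteratedDeriv 2 σ z) ^ 2 =
    (2 * (deriv σ z) ^ 2 + (ν₁ + ν₂ + ν₃ - z) * deriv σ z + σ z) ^ 2
      - 4 * deriv σ z * (deriv σ z + ν₁) * (deriv σ z + ν₂) * (deriv σ z + ν₃)


section Dets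
open Polynomial Matrix

theorem derivative_det_col {ι : Type*} [Fintype ι] [DecidableEq ι] (M : Matrix ι ι ℝ[X]) :
    derivative M.det = ∑ j, (M.updateCol j (fun i => derivative (M i j))).det := by
  simp only [Matrix.det_apply, derivative_sum, derivative_smul]
  rw [Finset.sum_comm]
  refine Finset.sum_congr rfl fun s _ => ?_
  rw [derivative_prod_finset, Finset.smul_sum]
  refine Finset.sum_congr rfl fun j _ => ?_
  congr 1
  rw [← Finset.prod_erase_mul _ _ (Finset.mem_univ j)]
  congr 1
  · refine Finset.prod_congr rfl fun i hi => ?_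
    rw [Matrix.updateCol_ne (Finset.ne_of_mem_erase hi)]
  · simp

/-- generalized Hankel matrix -/
def hk {R : Type*} {ι κ : Type*} (h : ℕ → R) (r : ι → ℕ) (c : κ → ℕ) : Matrix ι κ R :=
  Matrix.of fun i j => h (r i + c j)

def extIdx {k : ℕ} (x : ℕ) : Fin k ⊕ Unit → ℕ := Sum.elim (fun i => (i : ℕ)) (fun _ => x)

def gdet {R : Type*} [CommRing R] (h : ℕ → R) (k x y : ℕ) : R :=
  (hk h (extIdx (k := k) x) (extIdx (k := k) y)).det

def tauR {R : Type*} [CommRing R] (h : ℕ → R) (k : ℕ) : R :=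
  (hk h (fun i : Fin k => (i : ℕ)) (fun i : Fin k => (i : ℕ))).det

theorem gdet_symm {R : Type*} [CommRing R] (h : ℕ → R) (k x y : ℕ) :
    gdet h k x y = gdet h k y x := by
  unfold gdet
  rw [← Matrix.det_transpose]
  congr 1
  ext i j
  simp [hk, add_comm]

theorem gdet_tau {R : Type*} [CommRing R] (h : ℕ → R) (k : ℕ) :
    gdet h k k k = tauR h (k+1) := by
  unfold gdet tauR
  rw [← Matrix.det_submatrix_equiv_self ((Equiv.sumCongr (Equiv.refl (Fin k)) (finOneEquiv.symm)).trans finSumFinEquiv)]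
  congr 1
  ext i j
  rcases i with i | i <;> rcases j with j | j <;> simp [hk, extIdx]

theorem derivative_gdet (p : ℝ[X]) (k x : ℕ) :
    derivative (gdet (fun j => derivative^[j] p) k x k)
      = gdet (fun j => derivative^[j] p) k x (k+1) := by
  unfold gdet
  rw [derivative_det_col, Fintype.sum_sum_type]
  rw [Finset.sum_eq_zero, zero_add]
  · simp only [Finset.univ_unique, Finset.sum_singleton]
    congr 1
    ext1 i j
    rcases j with j | j
    · rw [Matrix.updateCol_ne (by simp)]
      simp [hk, extIdx]
    · simp [hk, extIdx, ← add_assoc, Function.iterate_succ_apply']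
  · intro j _
    by_cases hj : (j : ℕ) + 1 < k
    · refine Matrix.det_zero_of_column_eq (i := Sum.inl j) (j := Sum.inl ⟨j+1, hj⟩) ?_ ?_
      · simp [Fin.ext_iff]
      · intro i
        rw [Matrix.updateCol_self, Matrix.updateCol_ne (by simp [Fin.ext_iff])]
        simp [hk, extIdx, ← add_assoc, Function.iterate_succ_apply']
    · refine Matrix.det_zero_of_column_eq (i := Sum.inl j) (j := Sum.inr ()) (by simp) ?_
      intro i
      rw [Matrix.updateCol_self, Matrix.updateCol_ne (by simp)]
      have : (j : ℕ) + 1 = k := by omega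
      simp only [hk, extIdx, Matrix.of_apply, Sum.elim_inl, Sum.elim_inr]
      rw [← Function.iterate_succ_apply' (f := derivative)]
      congr 2
      omega

theorem desnanot {K : Type*} [Field K] (h : ℕ → K) (k : ℕ) (hk0 : tauR h k ≠ 0) :
    tauR h (k+2) * tauR h k =
      gdet h k k k * gdet h k (k+1) (k+1) - gdet h k k (k+1) * gdet h k (k+1) k := by
  set A : Matrix (Fin k) (Fin k) K := hk h (fun i : Fin k => (i : ℕ)) (fun i : Fin k => (i : ℕ)) with hA
  have hdet : tauR h k = A.det := rfl
  have : Invertible A := Matrix.invertibleOfIsUnitDet _ (isUnit_iff_ne_zero.2 hk0)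
  set d : ℕ → ℕ → K := fun x y => h (x+y) -
    ∑ j, (∑ i, h (x + (i : Fin k)) * (⅟A) i j) * h ((j : ℕ) + y) with hd
  have hg : ∀ x y, gdet h k x y = A.det * d x y := by
    intro x y
    have : hk h (extIdx (k := k) x) (extIdx (k := k) y) =
      Matrix.fromBlocks A (hk h (fun i : Fin k => (i : ℕ)) (fun _ : Unit => y))
        (hk h (fun _ : Unit => x) (fun i : Fin k => (i : ℕ))) (hk h (fun _ : Unit => x) (fun _ : Unit => y)) := by
      ext i j
      rcases i with i | i <;> rcases j with j | j <;> simp [hk, extIdx, hA]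
    unfold gdet
    rw [this, Matrix.det_fromBlocks₁₁]
    congr 1
    simp [Matrix.det_unique, Matrix.mul_apply, hk, hd]
  have ht : tauR h (k+2) = A.det * (d k k * d (k+1) (k+1) - d k (k+1) * d (k+1) k) := by
    unfold tauR
    rw [← Matrix.det_submatrix_equiv_self (finSumFinEquiv (m := k) (n := 2))]
    have : (hk h (fun i : Fin (k+2) => (i : ℕ)) (fun i : Fin (k+2) => (i : ℕ))).submatrix
        (finSumFinEquiv (m := k) (n := 2)) (finSumFinEquiv (m := k) (n := 2)) =
      Matrix.fromBlocks A (hk h (fun i : Fin k => (i : ℕ)) (fun y : Fin 2 => k + (y : ℕ)))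
        (hk h (fun x : Fin 2 => k + (x : ℕ)) (fun i : Fin k => (i : ℕ)))
        (hk h (fun x : Fin 2 => k + (x : ℕ)) (fun y : Fin 2 => k + (y : ℕ))) := by
      ext i j
      rcases i with i | i <;> rcases j with j | j <;> simp [hk, hA]
    rw [this, Matrix.det_fromBlocks₁₁, Matrix.det_fin_two]
    congr 1
  rw [ht, hdet, hg, hg, hg, hg]
  ring

theorem tauR_map {R S : Type*} [CommRing R] [CommRing S] (φ : R →+* S) (h : ℕ → R) (k : ℕ) :
    φ (tauR h k) = tauR (fun j => φ (h j)) k := by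
  unfold tauR
  rw [RingHom.map_det]
  congr 1

theorem gdet_map {R S : Type*} [CommRing R] [CommRing S] (φ : R →+* S) (h : ℕ → R) (k x y : ℕ) :
    φ (gdet h k x y) = gdet (fun j => φ (h j)) k x y := by
  unfold gdet
  rw [RingHom.map_det]
  congr 1

noncomputable def tauPol (p : ℝ[X]) (k : ℕ) : ℝ[X] := tauR (fun j => derivative^[j] p) k

theorem toda (p : ℝ[X]) (k : ℕ) (h0 : tauPol p k ≠ 0) :
    tauPol p (k+2) * tauPol p k = tauPol p (k+1) * derivative (derivative (tauPol p (k+1)))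
      - derivative (tauPol p (k+1)) ^ 2 := by
  have key : tauPol p (k+2) * tauPol p k =
      gdet (fun j => derivative^[j] p) k k k * gdet (fun j => derivative^[j] p) k (k+1) (k+1)
      - gdet (fun j => derivative^[j] p) k k (k+1) * gdet (fun j => derivative^[j] p) k (k+1) k := by
    apply IsFractionRing.injective ℝ[X] (FractionRing ℝ[X])
    simp only [map_mul, map_sub, gdet_map, tauPol, tauR_map]
    apply desnanot
    rw [← tauR_map]
    intro h
    apply h0
    apply IsFractionRing.injective ℝ[X] (FractionRing ℝ[X])
    rw [map_zero]
    exact h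
  rw [key]
  unfold tauPol
  rw [← gdet_tau, derivative_gdet, gdet_symm _ k k (k+1), derivative_gdet]
  ring

end Dets


section Backlund

def cF (N A n z S w : ℝ) : ℝ :=
  z*w - (A+2*n-2)*w + (A+2*n-2)*S + n*(N-n+1)

def cA (N A n z S w a : ℝ) : ℝ :=
  -2*w - z*a^2 + z*a - (A+2*n)*a - N - 2*S + 2*n

def cR (N A n z S w a : ℝ) : ℝ :=
  -2*S + n - 3*n^2 + 2*n^3 - w + 3*A*S - A*n + A*n^2 + A*w - A^2*S + N*n - 2*N*n^2 + 6*S*n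
  - 4*S*n^2 - S*z + S^2*z + 2*n*w + w^2*z - A*N*n - 4*A*S*n + A*S*z + N*S*z + N*w*z + 2*S*a*z
  + 2*S*w*z - a*n*z + a*n^2*z - a*w*z^2 + a^2*w*z^2 - 2*n*w*z - A*S*a*z + A*a*w*z - N*a*n*z
  - 2*S*a*n*z + 2*a*n*w*z

/-- The state at level `n`: the Hamiltonian system together with its first integral. -/
structure St (U : Set ℝ) (N A n : ℝ) (S w a : ℝ → ℝ) : Prop where
  dS : ∀ z ∈ U, HasDerivAt S (w z / z) z
  dw : ∀ z ∈ U, HasDerivAt w ((w z + 2*z*w z*a z - cF N A n z (S z) (w z)) / z) z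
  da : ∀ z ∈ U, HasDerivAt a (cA N A n z (S z) (w z) (a z) / z) z
  r0 : ∀ z ∈ U, cR N A n z (S z) (w z) (a z) = 0

/-- derivative of the new `w` -/
theorem St.dv {U : Set ℝ} {N A n : ℝ} {S w a : ℝ → ℝ} (h : St U N A n S w a)
    (h0 : (0:ℝ) ∉ U) {z : ℝ} (hz : z ∈ U) :
    HasDerivAt (fun t => w t + cA N A n t (S t) (w t) (a t))
      ((w z + cA N A n z (S z) (w z) (a z)
        + cF N A (n+1) z (S z + a z) (w z + cA N A n z (S z) (w z) (a z))
        - 2*z*(w z + cA N A n z (S z) (w z) (a z))*a z) / z) z := by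
  have hz0 : z ≠ 0 := fun e => h0 (e ▸ hz)
  have hS := h.dS z hz
  have hw := h.dw z hz
  have ha := h.da z hz
  have hid := hasDerivAt_id' z
  unfold cA
  refine HasDerivAt.congr_deriv (hw.add ((((((hw.const_mul (-2)).sub (hid.mul (ha.pow 2))).add
    (hid.mul ha)).sub (ha.const_mul (A+2*n))).sub_const N |>.sub (hS.const_mul 2)).add_const (2*n))) ?_
  unfold cF cA
  field_simp
  simp
  ring

theorem sigma_alg (N A n z S w a v : ℝ) (hv : v = w + cA N A n z S w a)
    (hr : cR N A n z S w a = 0) :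
    (cF N A (n+1) z (S+a) v - 2*z*v*a + 2*v)^2 =
      (2*(S+a+v)^2 + ((N-n) + (-(n+1)) + (N+A-1) - z)*(S+a+v) + (z*(S+a) - (N-n)*(n+1)))^2
      - 4*(S+a+v)*(S+a+v+(N-n))*(S+a+v+(-(n+1)))*(S+a+v+(N+A-1)) := by
  subst hv
  unfold cF cA
  unfold cR at hr
  linear_combination (4*(w + (-2*w - z*a^2 + z*a - (A+2*n)*a - N - 2*S + 2*n))) * hr

theorem r_alg (N A n z S w a v b : ℝ) (hv : v = w + cA N A n z S w a)
    (hb : z*v*(b+a) = cF N A (n+1) z (S+a) v) (hv0 : v ≠ 0) (hr : cR N A n z S w a = 0) :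
    cR N A (n+1) z (S+a) v b = 0 := by
  have h1 := sigma_alg N A n z S w a v hv hr
  have h2 : 2*z*v*b = 2*cF N A (n+1) z (S+a) v - 2*z*v*a := by linear_combination 2*hb
  have h3 : 4*v*cR N A (n+1) z (S+a) v b = (2*z*v*b + 2*v - cF N A (n+1) z (S+a) v)^2
      - ((2*(S+a+v)^2 + ((N-n) + (-(n+1)) + (N+A-1) - z)*(S+a+v) + (z*(S+a) - (N-n)*(n+1)))^2
      - 4*(S+a+v)*(S+a+v+(N-n))*(S+a+v+(-(n+1)))*(S+a+v+(N+A-1))) := by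
    unfold cR cF
    ring
  rw [h2, ← h1] at h3
  have h4 : 4*v*cR N A (n+1) z (S+a) v b = 0 := by rw [h3]; ring
  simpa [hv0] using h4

theorem b_alg (N A n z S w a v b f : ℝ) (hv : v = w + cA N A n z S w a) (hz : z ≠ 0)
    (hf : f = cF N A (n+1) z (S+a) v)
    (hb : b = f/(z*v) - a) (hv0 : v ≠ 0) (v' f' : ℝ)
    (hv' : v' = (v + f - 2*z*v*a)/z)
    (hf' : f' = v + z * v' - (A+2*n)*v' + (A+2*n)*(w/z + cA N A n z S w a / z)) :
    (f'*(z*v) - f*(v + z*v'))/(z*v)^2 - cA N A n z S w a / z = cA N A (n+1) z (S+a) v b / z := by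
  have h1 : z*v' = v + f - 2*z*v*a := by rw [hv']; field_simp
  have h2 : z*f' = z*v + (z - (A+2*n))*(v + f - 2*z*v*a) + (A+2*n)*v := by
    rw [hf', ← h1, hv]; field_simp; ring
  have h3 : z*v*(b+a) = f := by rw [hb]; field_simp; ring
  have h4 : cA N A n z S w a = v - w := by rw [hv]; ring
  have key : (z*f')*v - f*(v + (v + f - 2*z*v*a)) - cA N A n z S w a*(z*v^2)
     = (z*v^2) * cA N A (n+1) z (S+a) v b := by
    have hb2 : z*v^2*(z*b^2) = (f - z*v*a)^2 := by
      rw [← h3]; ring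
    have hb1 : z*v*b = f - z*v*a := by rw [← h3]; ring
    have h5 : (z*v^2) * cA N A (n+1) z (S+a) v b
      = (-2*v-N-2*(S+a)+2*n+2)*z*v^2 - (f - z*v*a)^2 + z*v*(f-z*v*a)
        - (A+2*n+2)*(f-z*v*a)*v := by
      rw [← hb1]; unfold cA; ring
    rw [h5, h2, hf, hv]
    unfold cF cA
    ring
  have e1 : (f'*(z*v) - f*(v + z*v'))/(z*v)^2 - cA N A n z S w a / z
     = ((z*f')*v - f*(v + z*v') - cA N A n z S w a*(z*v^2)) / (z*v)^2 := by
    field_simp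
  rw [e1, h1, key]
  field_simp

theorem St.step {U : Set ℝ} (hU : IsOpen U) {N A n : ℝ} {S w a : ℝ → ℝ} (h : St U N A n S w a)
    (h0 : (0:ℝ) ∉ U) (S1 v b : ℝ → ℝ) (hS1 : ∀ z ∈ U, S1 z = S z + a z)
    (hv : ∀ z ∈ U, v z = w z + cA N A n z (S z) (w z) (a z))
    (hv0 : ∀ z ∈ U, v z ≠ 0)
    (hb : ∀ z ∈ U, HasDerivAt v (v z / z + v z * (b z - a z)) z) :
    St U N A (n+1) S1 v b := by
  have ev : ∀ z ∈ U, ∀ᶠ t in nhds z, t ∈ U := fun z hz => hU.mem_nhds hz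
  have dv : ∀ z ∈ U, HasDerivAt v ((v z + cF N A (n+1) z (S z + a z) (v z) - 2*z*v z*a z)/z) z := by
    intro z hz
    rw [hv z hz]
    refine (h.dv h0 hz).congr_of_eventuallyEq ?_
    filter_upwards [ev z hz] with t ht using hv t ht
  have hz0 : ∀ z ∈ U, z ≠ 0 := fun z hz e => h0 (e ▸ hz)
  have hba : ∀ z ∈ U, z*v z*(b z+a z) = cF N A (n+1) z (S z+a z) (v z) := by
    intro z hz
    have e := (dv z hz).unique (hb z hz)
    have := hz0 z hz
    field_simp at e
    linear_combination -e
  have hb' : ∀ z ∈ U, b z = cF N A (n+1) z (S z+a z) (v z) / (z*v z) - a z := by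
    intro z hz
    have := hz0 z hz
    have := hv0 z hz
    rw [← hba z hz]
    field_simp
    ring
  refine ⟨?_, ?_, ?_, ?_⟩
  · intro z hz
    have : HasDerivAt S1 (w z / z + cA N A n z (S z) (w z) (a z) / z) z := by
      refine ((h.dS z hz).add (h.da z hz)).congr_of_eventuallyEq ?_
      filter_upwards [ev z hz] with t ht using hS1 t ht
    rw [hv z hz, add_div]
    exact this
  · intro z hz
    convert dv z hz using 1
    rw [hS1 z hz, ← hba z hz]
    ring
  · intro z hz
    rw [hS1 z hz]
    have hS := h.dS z hz
    have ha := h.da z hz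
    have hid := hasDerivAt_id' z
    have hvd := dv z hz
    have hF : HasDerivAt (fun t => cF N A (n+1) t (S t + a t) (v t))
       (v z + z * ((v z + cF N A (n+1) z (S z + a z) (v z) - 2*z*v z*a z)/z)
        - (A+2*n)*((v z + cF N A (n+1) z (S z + a z) (v z) - 2*z*v z*a z)/z)
        + (A+2*n)*(w z/z + cA N A n z (S z) (w z) (a z) / z)) z := by
      unfold cF
      refine HasDerivAt.congr_deriv ((((hid.mul hvd).sub (hvd.const_mul (A+2*(n+1)-2))).add
        ((hS.add ha).const_mul (A+2*(n+1)-2))).add_const ((n+1)*(N-(n+1)+1))) ?_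
      unfold cF
      ring
    have hq := (hF.div (hid.mul hvd) (mul_ne_zero (hz0 z hz) (hv0 z hz))).sub ha
    rw [← b_alg N A n z (S z) (w z) (a z) (v z) (b z) _ (hv z hz) (hz0 z hz) rfl (hb' z hz)
      (hv0 z hz) _ _ rfl rfl]
    refine HasDerivAt.congr_of_eventuallyEq ?_ (f := fun t => cF N A (n+1) t (S t + a t) (v t) / (t * v t) - a t) ?_
    · refine HasDerivAt.congr_deriv hq ?_
      simp only [Pi.mul_apply, one_mul]
    · filter_upwards [ev z hz] with t ht using hb' t ht
  · intro z hz
    rw [hS1 z hz]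
    exact r_alg N A n z (S z) (w z) (a z) (v z) (b z) (hv z hz) (hba z hz) (hv0 z hz) (h.r0 z hz)

end Backlund

section PolyFacts
open Polynomial

theorem coeff_toda (t : ℝ[X]) (e : ℕ) (hd : t.natDegree = e + 1) :
    (t * derivative (derivative t) - derivative t ^ 2).natDegree = 2 * e ∧
    t * derivative (derivative t) - derivative t ^ 2 ≠ 0 := by
  have ht : t ≠ 0 := by rintro rfl; simp at hd
  have hl : t.coeff (e+1) ≠ 0 := by
    rw [← hd]; exact leadingCoeff_ne_zero.2 ht
  have h1 : (derivative t).natDegree ≤ e := (natDegree_derivative_le t).trans (by omega)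
  have h2 : (derivative (derivative t)).natDegree ≤ e - 1 :=
    (natDegree_derivative_le _).trans (by omega)
  have hc1 : (derivative t).coeff e = t.coeff (e+1) * (e+1) := by rw [coeff_derivative]
  have hsq : (derivative t ^ 2).coeff (2*e) = (t.coeff (e+1) * (e+1))^2 := by
    rw [sq, two_mul, coeff_mul_add_eq_of_natDegree_le h1 h1, hc1, sq]
  have hn2 : (derivative t ^ 2).natDegree ≤ 2*e := by
    rw [sq, two_mul]; exact natDegree_mul_le_of_le h1 h1
  have hn1 : (t * derivative (derivative t)).natDegree ≤ 2*e ∧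
      (t * derivative (derivative t)).coeff (2*e) = t.coeff (e+1)^2 * ((e+1)*e) := by
    rcases Nat.eq_zero_or_pos e with rfl | he
    · have : derivative (derivative t) = 0 := by
        rw [eq_C_of_natDegree_le_zero h1]; simp
      simp [this]
    · obtain ⟨f, rfl⟩ : ∃ f, e = f + 1 := ⟨e-1, by omega⟩
      have h2' : (derivative (derivative t)).natDegree ≤ f := by simpa using h2
      have e2 : 2*(f+1) = (f+1+1) + f := by ring
      rw [e2]
      refine ⟨natDegree_mul_le_of_le hd.le h2', ?_⟩
      rw [coeff_mul_add_eq_of_natDegree_le hd.le h2', coeff_derivative, hc1]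
      push_cast
      ring
  have hco : (t * derivative (derivative t) - derivative t ^ 2).coeff (2*e) ≠ 0 := by
    rw [coeff_sub, hn1.2, hsq]
    have : t.coeff (e+1)^2 * (((e:ℝ)+1)*e) - (t.coeff (e+1) * ((e:ℝ)+1))^2
      = - (t.coeff (e+1)^2 * ((e:ℝ)+1)) := by ring
    rw [this]
    have h3 : (e:ℝ) + 1 ≠ 0 := by positivity
    simp [hl, h3]
  refine ⟨natDegree_eq_of_le_of_coeff_ne_zero ?_ hco, fun h => hco (by rw [h]; simp)⟩
  exact (natDegree_sub_le _ _).trans (max_le hn1.1 hn2)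

theorem tauPol_zero (p : ℝ[X]) : tauPol p 0 = 1 := by
  simp [tauPol, tauR]

theorem tauPol_one (p : ℝ[X]) : tauPol p 1 = p := by
  simp [tauPol, tauR, hk]

theorem tauPol_ne_zero (p : ℝ[X]) (N : ℕ) (hp : p.natDegree = N) (hp0 : p ≠ 0) (k : ℕ) :
    k ≤ N → (tauPol p k ≠ 0 ∧ (tauPol p k).natDegree = k * (N+1-k)) ∧
      (tauPol p (k+1) ≠ 0 ∧ (tauPol p (k+1)).natDegree = (k+1) * (N-k)) := by
  induction k with
  | zero => intro _; simp [tauPol_zero, tauPol_one, hp, hp0]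
  | succ k ih =>
    intro hk
    obtain ⟨⟨h1, h2⟩, h3, h4⟩ := ih (by omega)
    refine ⟨⟨h3, by rw [h4]; congr 1; omega⟩, ?_⟩
    obtain ⟨q, rfl⟩ : ∃ q, N = k + 1 + q := ⟨N - (k+1), by omega⟩
    have e1 : k + 1 + q - k = q + 1 := by omega
    have e2 : k + 1 + q + 1 - k = q + 2 := by omega
    have e3 : k + 1 + q - (k + 1) = q := by omega
    rw [e1] at h4
    rw [e2] at h2
    rw [e3]
    obtain ⟨g1, g2⟩ := coeff_toda (tauPol p (k+1)) (k*q + k + q) (by rw [h4]; ring)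
    have ht := toda p k h1
    rw [← ht] at g1 g2
    have hne : tauPol p (k+2) ≠ 0 := left_ne_zero_of_mul g2
    refine ⟨hne, ?_⟩
    rw [natDegree_mul hne h1, h2] at g1
    show (tauPol p (k+2)).natDegree = _
    nlinarith

def lS (p : ℝ[X]) (k : ℕ) (z : ℝ) : ℝ :=
  (derivative (tauPol p k)).eval z / (tauPol p k).eval z

def lW (p : ℝ[X]) (k : ℕ) (z : ℝ) : ℝ :=
  z * ((derivative (derivative (tauPol p k))).eval z / (tauPol p k).eval z
    - ((derivative (tauPol p k)).eval z / (tauPol p k).eval z)^2)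

def lA (p : ℝ[X]) (k : ℕ) (z : ℝ) : ℝ := lS p (k+1) z - lS p k z

def lV (p : ℝ[X]) (k : ℕ) (z : ℝ) : ℝ :=
  (derivative (derivative (tauPol p k))).eval z / (tauPol p k).eval z
    - ((derivative (tauPol p k)).eval z / (tauPol p k).eval z)^2
  + z * ((derivative (derivative (derivative (tauPol p k)))).eval z / (tauPol p k).eval z
    - 3 * (derivative (derivative (tauPol p k))).eval z * (derivative (tauPol p k)).eval z
      / (tauPol p k).eval z ^ 2
    + 2 * ((derivative (tauPol p k)).eval z / (tauPol p k).eval z)^3)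

theorem hasDerivAt_lS (p : ℝ[X]) (k : ℕ) (z : ℝ) (hz : z ≠ 0) (h : (tauPol p k).eval z ≠ 0) :
    HasDerivAt (lS p k) (lW p k z / z) z := by
  refine HasDerivAt.congr_deriv
    (((derivative (tauPol p k)).hasDerivAt z).div ((tauPol p k).hasDerivAt z) h) ?_
  unfold lW
  field_simp

theorem hasDerivAt_lW (p : ℝ[X]) (k : ℕ) (z : ℝ) (h : (tauPol p k).eval z ≠ 0) :
    HasDerivAt (lW p k) (lV p k z) z := by
  have h1 := ((derivative (tauPol p k)).hasDerivAt z).div ((tauPol p k).hasDerivAt z) h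
  have h2 := ((derivative (derivative (tauPol p k))).hasDerivAt z).div ((tauPol p k).hasDerivAt z) h
  refine HasDerivAt.congr_deriv ((hasDerivAt_id' z).mul (h2.sub (h1.pow 2))) ?_
  unfold lV
  simp only [Pi.sub_apply, Pi.div_apply, Pi.pow_apply, Nat.cast_ofNat, Nat.add_one_sub_one, pow_one]
  field_simp
  ring

theorem toda_eval (p : ℝ[X]) (k : ℕ) (z : ℝ) (h0 : (tauPol p k).eval z ≠ 0)
    (h1 : (tauPol p (k+1)).eval z ≠ 0) :
    lW p (k+1) z = z * ((tauPol p (k+2)).eval z * (tauPol p k).eval z / (tauPol p (k+1)).eval z ^ 2) := by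
  have ht := toda p k (by intro h; rw [h] at h0; simp at h0)
  have := congrArg (eval z) ht
  simp only [eval_mul, eval_sub, eval_pow] at this
  rw [this]
  unfold lW
  field_simp

/-- the good set -/
def gU (p : ℝ[X]) (n : ℕ) : Set ℝ := {z | z ≠ 0 ∧ ∀ j ∈ Finset.range (n+1), (tauPol p j).eval z ≠ 0}

theorem gU_open (p : ℝ[X]) (n : ℕ) : IsOpen (gU p n) := by
  have : gU p n = {z | z ≠ 0} ∩ ⋂ j ∈ Finset.range (n+1), {z | (tauPol p j).eval z ≠ 0} := by
    ext z; simp [gU]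
  rw [this]
  refine isOpen_ne.inter (isOpen_biInter_finset fun j _ => ?_)
  exact isOpen_ne_fun (tauPol p j).continuous continuous_const

theorem gU_dense (p : ℝ[X]) (n : ℕ) (h : ∀ j ≤ n, tauPol p j ≠ 0) : Dense (gU p n) := by
  have hq : (X * ∏ j ∈ Finset.range (n+1), tauPol p j) ≠ 0 := by
    refine mul_ne_zero X_ne_zero (Finset.prod_ne_zero_iff.2 fun j hj => h j ?_)
    have := Finset.mem_range.1 hj
    omega
  have hf : (((X * ∏ j ∈ Finset.range (n+1), tauPol p j).roots.toFinset : Finset ℝ) : Set ℝ).Countable :=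
    Finset.countable_toSet _
  refine (hf.dense_compl ℝ).mono ?_
  intro z hz
  simp only [Set.mem_compl_iff, Finset.mem_coe, Multiset.mem_toFinset, mem_roots hq, IsRoot.def,
    eval_mul, eval_X, eval_prod, mul_eq_zero, not_or, Finset.prod_eq_zero_iff, not_exists, not_and] at hz
  exact ⟨hz.1, hz.2⟩

theorem st_all (p : ℝ[X]) (N A : ℝ) (hode : ∀ z, z * (derivative (derivative p)).eval z
      + (A - z) * (derivative p).eval z + N * p.eval z = 0) (n k : ℕ) (hk : k + 1 ≤ n) :
    St (gU p n) N A k (lS p k) (lW p k) (lA p k) := by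
  have h0 : (0:ℝ) ∉ gU p n := fun h => h.1 rfl
  have hne : ∀ z ∈ gU p n, ∀ j ≤ n, (tauPol p j).eval z ≠ 0 := fun z hz j hj =>
    hz.2 j (Finset.mem_range.2 (by omega))
  induction k with
  | zero =>
    have hS0 : lS p 0 = fun _ => 0 := by ext z; simp [lS, tauPol_zero]
    have hW0 : lW p 0 = fun _ => 0 := by ext z; simp [lW, tauPol_zero]
    have hA0 : lA p 0 = lS p 1 := by ext z; simp [lA, hS0]
    rw [hS0, hW0, hA0]
    refine ⟨?_, ?_, ?_, ?_⟩
    · intro z hz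
      simpa using hasDerivAt_const z (0:ℝ)
    · intro z hz
      simpa [cF] using hasDerivAt_const z (0:ℝ)
    · intro z hz
      have hp := hne z hz 1 hk
      refine (hasDerivAt_lS p 1 z hz.1 hp).congr_deriv ?_
      rw [tauPol_one] at hp
      have := hode z
      congr 1
      unfold lW lS cA
      rw [tauPol_one]
      field_simp
      push_cast
      linear_combination (p.eval z) * this
    · intro z hz
      simp [cR]
  | succ k ih =>
    have hst := ih (by omega)
    have := hst.step (gU_open p n) h0 (lS p (k+1)) (lW p (k+1)) (lA p (k+1)) ?_ ?_ ?_ ?_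
    · push_cast
      exact this
    · intro z hz
      simp [lA]
    · intro z hz
      have d1 := hasDerivAt_lS p (k+1) z hz.1 (hne z hz _ (by omega))
      have d2 := (hst.dS z hz).add (hst.da z hz)
      have : lS p k + lA p k = lS p (k+1) := by ext z; simp [lA]
      rw [this] at d2
      have e := d1.unique d2
      have := hz.1
      field_simp at e
      linear_combination e
    · intro z hz
      rw [toda_eval p k z (hne z hz _ (by omega)) (hne z hz _ (by omega))]
      have i0 := hz.1
      have i1 := hne z hz k (by omega)
      have i2 := hne z hz (k+1) (by omega)
      have i3 := hne z hz (k+2) (by omega)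
      positivity
    · intro z hz
      have i0 := hz.1
      have i1 := hne z hz k (by omega)
      have i2 := hne z hz (k+1) (by omega)
      have i3 := hne z hz (k+2) (by omega)
      have hd := (hasDerivAt_id' z).mul ((((tauPol p (k+2)).hasDerivAt z).mul
        ((tauPol p k).hasDerivAt z)).div (((tauPol p (k+1)).hasDerivAt z).pow 2) (pow_ne_zero 2 i2))
      refine HasDerivAt.congr_of_eventuallyEq (f := fun z => z * ((tauPol p (k+2)).eval z * (tauPol p k).eval z / (tauPol p (k+1)).eval z ^ 2)) ?_ ?_
      · refine HasDerivAt.congr_deriv hd ?_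
        rw [toda_eval p k z i1 i2]
        simp only [Pi.mul_apply, Pi.div_apply, Pi.pow_apply]
        unfold lA lS
        field_simp
        push_cast
        ring
      · filter_upwards [(gU_open p n).mem_nhds hz] with t ht
        exact toda_eval p k t (hne t ht _ (by omega)) (hne t ht _ (by omega))

theorem sigma_good (p : ℝ[X]) (N A : ℝ) (hode : ∀ z, z * (derivative (derivative p)).eval z
      + (A - z) * (derivative p).eval z + N * p.eval z = 0) (k : ℕ) (z : ℝ) (hz : z ∈ gU p (k+1)) :
    (lW p (k+1) z + z * lV p (k+1) z)^2 =
      (2*(lS p (k+1) z + lW p (k+1) z)^2 + ((N-k) + (-((k:ℝ)+1)) + (N+A-1) - z)*(lS p (k+1) z + lW p (k+1) z)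
        + (z*lS p (k+1) z - (N-k)*(k+1)))^2
      - 4*(lS p (k+1) z + lW p (k+1) z)*(lS p (k+1) z + lW p (k+1) z+(N-k))
        *(lS p (k+1) z + lW p (k+1) z+(-((k:ℝ)+1)))*(lS p (k+1) z + lW p (k+1) z+(N+A-1)) := by
  have hne : ∀ z ∈ gU p (k+1), ∀ j ≤ k+1, (tauPol p j).eval z ≠ 0 := fun z hz j hj =>
    hz.2 j (Finset.mem_range.2 (by omega))
  have h0 : (0:ℝ) ∉ gU p (k+1) := fun h => h.1 rfl
  have hst := st_all p N A hode (k+1) k le_rfl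
  have hS : ∀ t, lS p (k+1) t = lS p k t + lA p k t := by intro t; simp [lA]
  have hv : ∀ z ∈ gU p (k+1), lW p (k+1) z = lW p k z + cA N A k z (lS p k z) (lW p k z) (lA p k z) := by
    intro z hz
    have d1 := hasDerivAt_lS p (k+1) z hz.1 (hne z hz _ le_rfl)
    have d2 := (hst.dS z hz).add (hst.da z hz)
    have : lS p k + lA p k = lS p (k+1) := by ext z; simp [lA]
    rw [this] at d2
    have e := d1.unique d2
    have := hz.1
    field_simp at e
    linear_combination e
  have hal := sigma_alg N A k z (lS p k z) (lW p k z) (lA p k z) _ (hv z hz) (hst.r0 z hz)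
  have d1 := hasDerivAt_lW p (k+1) z (hne z hz _ le_rfl)
  have d2 : HasDerivAt (lW p (k+1)) _ z := (hst.dv h0 hz).congr_of_eventuallyEq (by
    filter_upwards [(gU_open p (k+1)).mem_nhds hz] with t ht using hv t ht)
  have e := d1.unique d2
  rw [← hv z hz] at e
  have := hz.1
  have e' : z * lV p (k+1) z = lW p (k+1) z + cF N A (k+1) z (lS p k z + lA p k z) (lW p (k+1) z)
      - 2*z*lW p (k+1) z*lA p k z := by
    rw [e]; field_simp
  rw [e', hS z, ← hal]
  ring

theorem sigma_all (p : ℝ[X]) (N A : ℝ) (hode : ∀ z, z * (derivative (derivative p)).eval z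
      + (A - z) * (derivative p).eval z + N * p.eval z = 0) (k : ℕ)
    (hne : ∀ j ≤ k+1, tauPol p j ≠ 0) (z : ℝ) (hz : (tauPol p (k+1)).eval z ≠ 0) :
    (lW p (k+1) z + z * lV p (k+1) z)^2 =
      (2*(lS p (k+1) z + lW p (k+1) z)^2 + ((N-k) + (-((k:ℝ)+1)) + (N+A-1) - z)*(lS p (k+1) z + lW p (k+1) z)
        + (z*lS p (k+1) z - (N-k)*(k+1)))^2
      - 4*(lS p (k+1) z + lW p (k+1) z)*(lS p (k+1) z + lW p (k+1) z+(N-k))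
        *(lS p (k+1) z + lW p (k+1) z+(-((k:ℝ)+1)))*(lS p (k+1) z + lW p (k+1) z+(N+A-1)) := by
  have c1 : ContinuousAt (lS p (k+1)) z :=
    ((derivative (tauPol p (k+1))).continuous.continuousAt).div ((tauPol p (k+1)).continuous.continuousAt) hz
  have c2 : ContinuousAt (lW p (k+1)) z := (hasDerivAt_lW p (k+1) z hz).continuousAt
  have c3 : ContinuousAt (lV p (k+1)) z := by
    have a0 := (tauPol p (k+1)).continuous.continuousAt (x := z)
    have a1 := (derivative (tauPol p (k+1))).continuous.continuousAt (x := z)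
    have a2 := (derivative (derivative (tauPol p (k+1)))).continuous.continuousAt (x := z)
    have a3 := (derivative (derivative (derivative (tauPol p (k+1))))).continuous.continuousAt (x := z)
    have b1 := a1.div a0 hz
    have b2 := a2.div a0 hz
    have b3 := a3.div a0 hz
    have b4 := ((a2.const_mul 3).mul a1).div (a0.pow 2) (pow_ne_zero 2 hz)
    exact (b2.sub (b1.pow 2)).add (continuousAt_id.mul ((b3.sub b4).add ((b1.pow 3).const_mul 2)))
  have hfr : (nhdsWithin z (gU p (k+1))).NeBot :=
    mem_closure_iff_nhdsWithin_neBot.1 (gU_dense p (k+1) hne z)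
  have cid : ContinuousAt (fun t : ℝ => t) z := continuousAt_id
  have cc : ∀ c : ℝ, ContinuousAt (fun _ : ℝ => c) z := fun c => continuousAt_const
  have csw := c1.add c2
  have L := ((c2.add (cid.mul c3)).pow 2)
  have R := ((((csw.pow 2).const_mul 2).add
    (((cc ((N-k) + (-((k:ℝ)+1)) + (N+A-1))).sub cid).mul csw)).add
      ((cid.mul c1).sub (cc ((N-k)*(k+1))))).pow 2 |>.sub
    ((((csw.const_mul 4).mul (csw.add (cc (N-k)))).mul (csw.add (cc (-((k:ℝ)+1))))).mul
      (csw.add (cc (N+A-1))))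
  have L' := L.tendsto.mono_left (nhdsWithin_le_nhds (s := gU p (k+1)))
  have R' := R.tendsto.mono_left (nhdsWithin_le_nhds (s := gU p (k+1)))
  refine tendsto_nhds_unique (L'.congr' ?_) R'
  filter_upwards [self_mem_nhdsWithin] with t ht
  exact sigma_good p N A hode k t ht

end PolyFacts

section Lag
open Polynomial

def lagCoef (N : ℕ) (x : ℝ) (k : ℕ) : ℝ :=
  if k ≤ N then (-1 : ℝ) ^ k * genBinom x (N - k) / (Nat.factorial k) else 0

def lagPol (N : ℕ) (x : ℝ) : ℝ[X] := ∑ k ∈ Finset.range (N+1), C (lagCoef N x k) * X ^ k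

theorem lagPol_coeff (N : ℕ) (x : ℝ) (k : ℕ) : (lagPol N x).coeff k = lagCoef N x k := by
  unfold lagPol
  simp only [finsetSum_coeff, coeff_C_mul, coeff_X_pow, mul_ite, mul_one, mul_zero]
  rw [Finset.sum_ite_eq]
  unfold lagCoef
  simp only [Finset.mem_range, Nat.lt_succ_iff]
  split_ifs <;> rfl

theorem genBinom_succ (x : ℝ) (j : ℕ) : genBinom x (j+1) * (j+1) = genBinom x j * (x - j) := by
  unfold genBinom
  rw [Finset.prod_range_succ, Nat.factorial_succ]
  have : (Nat.factorial j : ℝ) ≠ 0 := by positivity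
  push_cast
  field_simp

theorem lagCoef_rec (N : ℕ) (x : ℝ) (k : ℕ) :
    (k + 1) * (k + (x - N + 1)) * lagCoef N x (k+1) = -((N:ℝ) - k) * lagCoef N x k := by
  rcases lt_trichotomy k N with h | h | h
  · obtain ⟨j, rfl⟩ : ∃ j, N = k + 1 + j := ⟨N - (k+1), by omega⟩
    have e1 : k + 1 + j - (k+1) = j := by omega
    have e2 : k + 1 + j - k = j + 1 := by omega
    rw [lagCoef, lagCoef, if_pos (by omega), if_pos (by omega), e1, e2, Nat.factorial_succ]
    have := genBinom_succ x j
    have : (Nat.factorial k : ℝ) ≠ 0 := by positivity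
    push_cast
    field_simp
    have h := genBinom_succ x j
    rw [pow_succ]
    linear_combination ((-1:ℝ)^k) * h
  · subst h
    simp [lagCoef]
  · rw [lagCoef, lagCoef, if_neg (by omega), if_neg (by omega)]
    simp

theorem lagPol_ode (N : ℕ) (x : ℝ) (z : ℝ) :
    z * (derivative (derivative (lagPol N x))).eval z
      + ((x - N + 1) - z) * (derivative (lagPol N x)).eval z + N * (lagPol N x).eval z = 0 := by
  have h : X * derivative (derivative (lagPol N x)) + C (x - N + 1) * derivative (lagPol N x)
      - X * derivative (lagPol N x) + C (N:ℝ) * lagPol N x = 0 := by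
    ext j
    have hr := lagCoef_rec N x j
    rcases j with _ | j
    · simp only [coeff_add, coeff_sub, coeff_C_zero, mul_coeff_zero, coeff_X_zero, coeff_derivative,
        lagPol_coeff, coeff_zero]
      push_cast at hr ⊢
      linear_combination hr
    · simp only [coeff_add, coeff_sub, coeff_C_mul, coeff_X_mul, coeff_derivative,
        lagPol_coeff, coeff_zero]
      push_cast at hr ⊢
      linear_combination hr
  have := congrArg (eval z) h
  simp only [eval_add, eval_sub, eval_mul, eval_X, eval_C, eval_zero] at this
  linear_combination this

theorem lagPol_natDegree (N : ℕ) (x : ℝ) : (lagPol N x).natDegree = N ∧ lagPol N x ≠ 0 := by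
  have hc : (lagPol N x).coeff N ≠ 0 := by
    rw [lagPol_coeff, lagCoef, if_pos le_rfl]
    have : (Nat.factorial N : ℝ) ≠ 0 := by positivity
    simp [genBinom, this]
  refine ⟨natDegree_eq_of_le_of_coeff_ne_zero ?_ hc, fun h => hc (by rw [h]; simp)⟩
  rw [natDegree_le_iff_coeff_eq_zero]
  intro k hk
  rw [lagPol_coeff, lagCoef, if_neg (by omega)]

theorem lagL_eq (m n : ℕ) (α : ℝ) :
    lagL ((m:ℤ) + n) α = fun z => (lagPol (m+n) ((m:ℝ) + n + α)).eval z := by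
  ext z
  have h1 : ¬ ((m:ℤ) + n < 0) := by omega
  have h2 : ((m:ℤ) + n).toNat = m + n := by omega
  unfold lagL lagPol
  rw [if_neg h1, h2, eval_finsetSum]
  refine Finset.sum_congr rfl fun k hk => ?_
  have : k ≤ m + n := by have := Finset.mem_range.1 hk; omega
  rw [lagCoef, if_pos this]
  simp only [eval_mul, eval_C, eval_pow, eval_X]
  push_cast
  ring

theorem iteratedDeriv_eval (p : ℝ[X]) (k : ℕ) :
    iteratedDeriv k (fun z => p.eval z) = fun z => (derivative^[k] p).eval z := by
  induction k with
  | zero => simp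
  | succ k ih =>
    rw [iteratedDeriv_succ, ih, Function.iterate_succ_apply']
    ext z
    exact Polynomial.deriv _

theorem genLag_eq (m n : ℕ) (μ : ℝ) :
    genLag (m:ℤ) n μ = fun z => (tauPol (lagPol (m+n) ((m:ℝ) + n + (μ+1))) n).eval z := by
  ext z
  unfold genLag
  rw [lagL_eq]
  simp only [iteratedDeriv_eval]
  have := tauR_map (evalRingHom z) (fun j => derivative^[j] (lagPol (m+n) ((m:ℝ) + n + (μ+1)))) n
  rw [coe_evalRingHom] at this
  unfold tauPol
  rw [this]
  rfl

end Lag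

/-- rational solution of `S_V` from the generalised Laguerre polynomials. -/
theorem sv_rational_solution (m n : ℕ) (hn : 1 ≤ n) (μ : ℝ) (σ : ℝ → ℝ)
    (hσ : σ = fun z =>
      z * deriv (genLag (m : ℤ) n μ) z / genLag (m : ℤ) n μ z - ((m : ℝ) + 1) * n) :
    ∀ z : ℝ, z ≠ 0 → genLag (m : ℤ) n μ z ≠ 0 →
      SV ((m : ℝ) + 1) (-(n : ℝ)) ((m : ℝ) + n + μ + 1) σ z := by
  intro z hz hT
  obtain ⟨k, rfl⟩ : ∃ k, n = k + 1 := ⟨n - 1, by omega⟩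
  set p := lagPol (m+(k+1)) ((m:ℝ) + ((k+1:ℕ):ℝ) + (μ+1)) with hp
  have hG : genLag (m:ℤ) (k+1) μ = fun z => (tauPol p (k+1)).eval z := genLag_eq m (k+1) μ
  rw [hG] at hT
  replace hT : (tauPol p (k+1)).eval z ≠ 0 := hT
  have hode : ∀ z, z * (Polynomial.derivative (Polynomial.derivative p)).eval z
      + ((μ + 2) - z) * (Polynomial.derivative p).eval z + ((m:ℝ)+(k+1)) * p.eval z = 0 := by
    intro z
    have := lagPol_ode (m+(k+1)) ((m:ℝ) + ((k+1:ℕ):ℝ) + (μ+1)) z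
    rw [← hp] at this
    push_cast at this
    linear_combination this
  have hdeg := lagPol_natDegree (m+(k+1)) ((m:ℝ) + ((k+1:ℕ):ℝ) + (μ+1))
  rw [← hp] at hdeg
  have hne : ∀ j ≤ k+1, tauPol p j ≠ 0 := fun j hj =>
    (tauPol_ne_zero p (m+(k+1)) hdeg.1 hdeg.2 j (by omega)).1.1
  have key := sigma_all p ((m:ℝ)+(k+1)) (μ+2) hode k hne z hT
  have hσ' : σ = fun t => t * lS p (k+1) t - ((m : ℝ) + 1) * ((k+1:ℕ):ℝ) := by
    rw [hσ, hG]
    ext t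
    rw [Polynomial.deriv, lS]
    ring
  have ev : ∀ᶠ t in nhds z, t ≠ 0 ∧ (tauPol p (k+1)).eval t ≠ 0 :=
    ((isOpen_ne.inter (isOpen_ne_fun (tauPol p (k+1)).continuous continuous_const)).mem_nhds
      ⟨hz, hT⟩)
  have d1 : ∀ t, t ≠ 0 → (tauPol p (k+1)).eval t ≠ 0 →
      HasDerivAt σ (lS p (k+1) t + lW p (k+1) t) t := by
    intro t ht0 ht
    rw [hσ']
    refine (((hasDerivAt_id' t).mul (hasDerivAt_lS p (k+1) t ht0 ht)).sub_const _).congr_deriv ?_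
    field_simp
  have e1 : deriv σ z = lS p (k+1) z + lW p (k+1) z := (d1 z hz hT).deriv
  have e2 : iteratedDeriv 2 σ z = lW p (k+1) z / z + lV p (k+1) z := by
    rw [iteratedDeriv_succ, iteratedDeriv_one]
    have : HasDerivAt (deriv σ) (lW p (k+1) z / z + lV p (k+1) z) z := by
      refine ((hasDerivAt_lS p (k+1) z hz hT).add (hasDerivAt_lW p (k+1) z hT)).congr_of_eventuallyEq ?_
      filter_upwards [ev] with t ht
      exact (d1 t ht.1 ht.2).deriv
    exact this.deriv
  have e3 : z * iteratedDeriv 2 σ z = lW p (k+1) z + z * lV p (k+1) z := by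
    rw [e2]; field_simp
  have e4 : σ z = z * lS p (k+1) z - ((m : ℝ) + 1) * ((k+1:ℕ):ℝ) := by rw [hσ']
  unfold SV
  rw [e3, e1, e4, key]
  push_cast
  ring
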